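/- arXiv:math/0610523 — 2 statements merged into one kernel-verified Lean document; each statement's English description precedes it below -/
import Mathlib

section
/- Let C be a quadratic pair module. Then for every x ∈ C₀ the element P((x|x)_H) lies in h₁C = Ker(∂); it satisfies P((x+∂(c) | x+∂(c))_H) = P((x|x)_H) for every c ∈ C₁, P((x+y | x+y)_H) = P((x|x)_H) + P((y|y)_H) for all x,y ∈ C₀, and 2·P((x|x)_H) = 0. Hence x ↦ P((x|x)_H) induces a well-defined group homomorphism k: h₀C ⊗ ℤ/2 → h₁C (the k-invariant of C). -/
/-!
The heart of the matter is the antisymmetry `P((b|a)_H) = -P((a|b)_H)` in `C₁`. The commutator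
`-a - b + a + b` is `∂P((a|b)_H)`, which pairs trivially under the cross effect, so comparing `H`
on `a + b` and `b + a` gives `H∂P((a|b)_H) = (a|b)_H - (b|a)_H`. Apply `P` and use `PH∂P = 2P`.
Antisymmetry on the diagonal is the 2-torsion, and it cancels the mixed terms of
`P((x + y|x + y)_H)`. Boundaries contribute nothing, since `P((∂c|∂c)_H)` is the commutator of `c`
with itself.
-/

/-- The cross effect `(a|b)_H = H(a+b) - H(b) - H(a)` of a function `H` between groups. -/
def crossEff {Xe Xee : Type*} [AddGroup Xe] [AddCommGroup Xee]
    (H : Xe → Xee) (a b : Xe) : Xee :=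
  H (a + b) - H b - H a

/-- A square group structure on a (not necessarily abelian) group `Xe` and an abelian
group `Xee`, given by a homomorphism `P : Xee → Xe` and a quadratic map `H : Xe → Xee`. -/
structure IsSquareGroup {Xe Xee : Type*} [AddGroup Xe] [AddCommGroup Xee]
    (P : Xee →+ Xe) (H : Xe → Xee) : Prop where
  cross_add_left : ∀ a b c : Xe,
    crossEff H (a + b) c = crossEff H a c + crossEff H b c
  cross_add_right : ∀ a b c : Xe,
    crossEff H a (b + c) = crossEff H a b + crossEff H a c
  cross_P_left : ∀ (x : Xee) (b : Xe), crossEff H (P x) b = 0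
  cross_P_right : ∀ (a : Xe) (y : Xee), crossEff H a (P y) = 0
  P_cross : ∀ a b : Xe, P (crossEff H a b) = -a - b + a + b
  P_H_P : ∀ x : Xee, P (H (P x)) = P x + P x


/-- A quadratic pair module: groups `C0`, `C1`, an abelian group `Cee`, homomorphisms
`∂ : C1 → C0` and `P : Cee → C1` and a map `H : C0 → Cee` such that
`(C0, Cee, ∂∘P, H)` and `(C1, Cee, P, H∘∂)` are square groups. -/
structure QuadraticPairModule (C0 C1 Cee : Type*)
    [AddGroup C0] [AddGroup C1] [AddCommGroup Cee] where
  d : C1 →+ C0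
  P : Cee →+ C1
  H : C0 → Cee
  sq0 : IsSquareGroup (d.comp P) H
  sq1 : IsSquareGroup P (H ∘ d)

section CrossEff

variable {X Y Z : Type*} [AddGroup X] [AddGroup Y] [AddCommGroup Z]

lemma crossEff_comp (H : Y → Z) (f : X →+ Y) (a b : X) :
    crossEff (H ∘ f) a b = crossEff H (f a) (f b) := by
  simp only [crossEff, Function.comp_apply, map_add]

lemma crossEff_sub_crossEff_swap (H : X → Z) (a b : X) :
    crossEff H a b - crossEff H b a = H (a + b) - H (b + a) := by
  unfold crossEff
  abel

end CrossEff

namespace IsSquareGroup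

variable {Xe Xee : Type*} [AddGroup Xe] [AddCommGroup Xee] {P : Xee →+ Xe} {H : Xe → Xee}

lemma P_cross_self_eq_zero (h : IsSquareGroup P H) (a : Xe) : P (crossEff H a a) = 0 := by
  rw [h.P_cross, sub_add_cancel, neg_add_cancel]

lemma add_P_cross (h : IsSquareGroup P H) (a b : Xe) :
    b + a + P (crossEff H a b) = a + b := by
  rw [h.P_cross]
  simp only [sub_eq_add_neg, add_assoc, add_neg_cancel_left]

lemma H_add_P (h : IsSquareGroup P H) (a : Xe) (x : Xee) :
    H (a + P x) = H a + H (P x) := by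
  have hcross : H (a + P x) - H (P x) - H a = 0 := h.cross_P_right a x
  rwa [sub_sub, sub_eq_zero, add_comm] at hcross

lemma H_P_cross (h : IsSquareGroup P H) (a b : Xe) :
    H (P (crossEff H a b)) = crossEff H a b - crossEff H b a :=
  calc
    H (P (crossEff H a b)) = H (b + a + P (crossEff H a b)) - H (b + a) := by
      rw [h.H_add_P, add_sub_cancel_left]
    _ = H (a + b) - H (b + a) := by rw [h.add_P_cross]
    _ = crossEff H a b - crossEff H b a := (crossEff_sub_crossEff_swap H a b).symm

end IsSquareGroup

namespace QuadraticPairModule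

variable {C0 C1 Cee : Type*} [AddGroup C0] [AddGroup C1] [AddCommGroup Cee]
  (C : QuadraticPairModule C0 C1 Cee)

lemma P_cross_swap (a b : C0) : C.P (crossEff C.H b a) = -C.P (crossEff C.H a b) := by
  have hdouble : C.P (crossEff C.H a b) - C.P (crossEff C.H b a) =
      C.P (crossEff C.H a b) + C.P (crossEff C.H a b) :=
    calc
      C.P (crossEff C.H a b) - C.P (crossEff C.H b a)
          = C.P (crossEff C.H a b - crossEff C.H b a) := (map_sub C.P _ _).symm
      _ = C.P (C.H (C.d (C.P (crossEff C.H a b)))) := congrArg C.P (C.sq0.H_P_cross a b).symm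
      _ = C.P (crossEff C.H a b) + C.P (crossEff C.H a b) := C.sq1.P_H_P _
  rw [sub_eq_add_neg] at hdouble
  exact neg_eq_iff_eq_neg.mp (add_left_cancel hdouble)

lemma P_cross_self_add_P_cross_self (x : C0) :
    C.P (crossEff C.H x x) + C.P (crossEff C.H x x) = 0 :=
  eq_neg_iff_add_eq_zero.mp (C.P_cross_swap x x)

lemma P_cross_self_add (x y : C0) :
    C.P (crossEff C.H (x + y) (x + y)) = C.P (crossEff C.H x x) + C.P (crossEff C.H y y) :=
  calc
    C.P (crossEff C.H (x + y) (x + y))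
        = C.P (crossEff C.H x x) + C.P (crossEff C.H x y) +
            (C.P (crossEff C.H y x) + C.P (crossEff C.H y y)) := by
          simp only [C.sq0.cross_add_left, C.sq0.cross_add_right, map_add]
    _ = C.P (crossEff C.H x x) + C.P (crossEff C.H y y) := by
          rw [C.P_cross_swap x y, add_assoc, add_neg_cancel_left]

lemma P_cross_self_d (c : C1) : C.P (crossEff C.H (C.d c) (C.d c)) = 0 := by
  rw [← crossEff_comp, C.sq1.P_cross_self_eq_zero]

lemma P_cross_self_add_d (x : C0) (c : C1) :
    C.P (crossEff C.H (x + C.d c) (x + C.d c)) = C.P (crossEff C.H x x) := by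
  rw [C.P_cross_self_add, C.P_cross_self_d, add_zero]

end QuadraticPairModule

/-- For a quadratic pair module `C`, the element `P((x|x)_H)` lies in
`h₁C = Ker ∂`, is invariant under changing `x` by a boundary `∂c`, is additive in the class
of `x`, and is 2-torsion.  Hence `x ↦ P((x|x)_H)` induces a well-defined group homomorphism
`k : h₀C ⊗ ℤ/2 → h₁C`, the k-invariant of `C`. -/
theorem kInvariant_well_defined {C0 C1 Cee : Type*}
    [AddGroup C0] [AddGroup C1] [AddCommGroup Cee]
    (C : QuadraticPairModule C0 C1 Cee) :
    (∀ x : C0, C.d (C.P (crossEff C.H x x)) = 0) ∧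
    (∀ (x : C0) (c : C1),
      C.P (crossEff C.H (x + C.d c) (x + C.d c)) = C.P (crossEff C.H x x)) ∧
    (∀ x y : C0,
      C.P (crossEff C.H (x + y) (x + y)) =
        C.P (crossEff C.H x x) + C.P (crossEff C.H y y)) ∧
    (∀ x : C0, C.P (crossEff C.H x x) + C.P (crossEff C.H x x) = 0) := by
  exact ⟨C.sq0.P_cross_self_eq_zero, C.P_cross_self_add_d, C.P_cross_self_add,
    C.P_cross_self_add_P_cross_self⟩
end

section
/- Let C be an E∞-pair algebra, B a C-algebra with unit u: C → B, and let x ∈ C_{n,0}, y ∈ B_{n,1} with ∂(y) = u₀(x). Then for every homogeneous a ∈ h₀B of degree |a| with representative ā ∈ B_{|a|,0}, the element θ_{(x,y)}(a) := −y·ā + (−1)^{n·|a|} ā·y + x ⌣₁ ā lies in h₁B = Ker(∂), is independent of the choice of the representative ā, and the resulting map θ_{(x,y)}: h₀B → h₁B is additive and a degree-n derivation: θ_{(x,y)}(a·b) = θ_{(x,y)}(a)·b + (−1)^{n·|a|} a·θ_{(x,y)}(b); moreover θ_{(x,y)} vanishes on the image of h₀u: h₀C → h₀B (hence is h₀C-linear).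 -/
/-! `θ_{(x,y)}(ā) = x ⌣₁ ā − [y, ā]` is the difference of two graded derivations of degree `n`:
graded commutators satisfy the Leibniz rule by associativity, and `x ⌣₁ -` inherits it from
`- ⌣₁ x` by skew-symmetry. The cup-one product measures the failure of graded commutativity, so when
`∂y = u₀(x)` the two derivations agree after applying `∂`, on boundaries (where
`∂y·c = y·∂c` and `c·∂y = ∂c·y`), and on the image of `u₀` (where `x ⌣₁ u₀(z) = ∂y ⌣₁ z`). -/

/-- An ℕ-graded pair algebra: an ℕ-graded ring `B_{*,0}` (given by the family `B0` with
degreewise-defined multiplication `mul`), an ℕ-graded `B_{*,0}`-bimodule `B_{*,1}` (the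
family `B1` with actions `smul`, `smulr`) and a bimodule homomorphism `∂ : B_{*,1} → B_{*,0}`
satisfying `∂(a)·b = a·∂(b)`.  Multiplications are indexed by a proof `p + q = r` recording
the additivity of degrees. -/
structure PairAlgebra (B0 B1 : ℕ → Type*)
    [∀ n, AddCommGroup (B0 n)] [∀ n, AddCommGroup (B1 n)] where
  d : ∀ n, B1 n →+ B0 n
  mul : ∀ {p q r : ℕ}, p + q = r → B0 p → B0 q → B0 r
  smul : ∀ {p q r : ℕ}, p + q = r → B0 p → B1 q → B1 r
  smulr : ∀ {p q r : ℕ}, p + q = r → B1 p → B0 q → B1 r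
  one : B0 0
  mul_add : ∀ {p q r : ℕ} (h : p + q = r) (x : B0 p) (y y' : B0 q),
    mul h x (y + y') = mul h x y + mul h x y'
  add_mul : ∀ {p q r : ℕ} (h : p + q = r) (x x' : B0 p) (y : B0 q),
    mul h (x + x') y = mul h x y + mul h x' y
  smul_add : ∀ {p q r : ℕ} (h : p + q = r) (x : B0 p) (s s' : B1 q),
    smul h x (s + s') = smul h x s + smul h x s'
  add_smul : ∀ {p q r : ℕ} (h : p + q = r) (x x' : B0 p) (s : B1 q),
    smul h (x + x') s = smul h x s + smul h x' s
  smulr_add : ∀ {p q r : ℕ} (h : p + q = r) (s : B1 p) (x x' : B0 q),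
    smulr h s (x + x') = smulr h s x + smulr h s x'
  add_smulr : ∀ {p q r : ℕ} (h : p + q = r) (s s' : B1 p) (x : B0 q),
    smulr h (s + s') x = smulr h s x + smulr h s' x
  one_mul : ∀ {q : ℕ} (x : B0 q), mul (Nat.zero_add q) one x = x
  mul_one : ∀ {p : ℕ} (x : B0 p), mul rfl x one = x
  one_smul : ∀ {q : ℕ} (s : B1 q), smul (Nat.zero_add q) one s = s
  smulr_one : ∀ {p : ℕ} (s : B1 p), smulr rfl s one = s
  mul_assoc : ∀ {p q r : ℕ} (x : B0 p) (y : B0 q) (z : B0 r),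
    mul rfl (mul rfl x y) z = mul (Nat.add_assoc p q r).symm x (mul rfl y z)
  mul_smul_assoc : ∀ {p q r : ℕ} (x : B0 p) (y : B0 q) (s : B1 r),
    smul rfl (mul rfl x y) s = smul (Nat.add_assoc p q r).symm x (smul rfl y s)
  smul_smulr_assoc : ∀ {p q r : ℕ} (x : B0 p) (s : B1 q) (y : B0 r),
    smulr rfl (smul rfl x s) y = smul (Nat.add_assoc p q r).symm x (smulr rfl s y)
  smulr_mul_assoc : ∀ {p q r : ℕ} (s : B1 p) (y : B0 q) (z : B0 r),
    smulr rfl (smulr rfl s y) z = smulr (Nat.add_assoc p q r).symm s (mul rfl y z)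
  d_smul : ∀ {p q r : ℕ} (h : p + q = r) (x : B0 p) (s : B1 q),
    d r (smul h x s) = mul h x (d q s)
  d_smulr : ∀ {p q r : ℕ} (h : p + q = r) (s : B1 p) (x : B0 q),
    d r (smulr h s x) = mul h (d p s) x
  smul_d : ∀ {p q r : ℕ} (h : p + q = r) (s : B1 p) (t : B1 q),
    smul h (d p s) t = smulr h s (d q t)

variable {B0 B1 : ℕ → Type*} [∀ n, AddCommGroup (B0 n)] [∀ n, AddCommGroup (B1 n)]

/-- A cup-one product turning the pair algebra `A` into an E∞-pair algebra: an additive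
operation `⌣₁ : B_{p,0} ⊗ B_{q,0} → B_{p+q,1}` measuring the commutativity of `A` and
satisfying the four laws of an E∞-pair algebra. -/
structure EInftyCup (A : PairAlgebra B0 B1) where
  cup : ∀ {p q r : ℕ}, p + q = r → B0 p → B0 q → B1 r
  cup_add_left : ∀ {p q r : ℕ} (h : p + q = r) (x x' : B0 p) (y : B0 q),
    cup h (x + x') y = cup h x y + cup h x' y
  cup_add_right : ∀ {p q r : ℕ} (h : p + q = r) (x : B0 p) (y y' : B0 q),
    cup h x (y + y') = cup h x y + cup h x y'
  cup_comm_mul : ∀ {p q r : ℕ} (h : p + q = r) (x₁ : B0 p) (x₂ : B0 q),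
    ((-1 : ℤ) ^ (p * q)) • A.mul ((Nat.add_comm q p).trans h) x₂ x₁ + A.d r (cup h x₁ x₂)
      = A.mul h x₁ x₂
  cup_d : ∀ {p q r : ℕ} (h : p + q = r) (s : B1 p) (x₂ : B0 q),
    ((-1 : ℤ) ^ (p * q)) • A.smul ((Nat.add_comm q p).trans h) x₂ s + cup h (A.d p s) x₂
      = A.smulr h s x₂
  cup_skew : ∀ {p q r : ℕ} (h : p + q = r) (x₁ : B0 p) (x₂ : B0 q),
    ((-1 : ℤ) ^ (p * q)) • cup ((Nat.add_comm q p).trans h) x₂ x₁ + cup h x₁ x₂ = 0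
  cup_mul : ∀ {p q r : ℕ} (x₁ : B0 p) (x₂ : B0 q) (x₃ : B0 r),
    cup rfl (A.mul rfl x₁ x₂) x₃
      = ((-1 : ℤ) ^ (q * r)) •
          A.smulr (by omega : p + r + q = p + q + r) (cup rfl x₁ x₃) x₂
        + A.smul (by omega : p + (q + r) = p + q + r) x₁ (cup rfl x₂ x₃)

variable {C0 C1 A0 A1 : ℕ → Type*}
variable [∀ n, AddCommGroup (C0 n)] [∀ n, AddCommGroup (C1 n)]
variable [∀ n, AddCommGroup (A0 n)] [∀ n, AddCommGroup (A1 n)]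

/-- An algebra `B` over an E∞-pair algebra `(C, Ccup)`: a pair algebra `B` together with a
unit morphism `u : C → B` of pair algebras and external cup-one products
`⌣₁ : B_{n,0} × C_{m,0} → B_{n+m,1}` (`cupBC`) and `⌣₁ : C_{n,0} × B_{m,0} → B_{n+m,1}`
(`cupCB`), additive in each variable, satisfying the seven compatibility laws. -/
structure CAlgebra (C : PairAlgebra C0 C1) (Ccup : EInftyCup C)
    (B : PairAlgebra A0 A1) where
  u0 : ∀ n, C0 n →+ A0 n
  u1 : ∀ n, C1 n →+ A1 n
  u_d : ∀ (n : ℕ) (s : C1 n), B.d n (u1 n s) = u0 n (C.d n s)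
  u0_one : u0 0 C.one = B.one
  u0_mul : ∀ {p q r : ℕ} (h : p + q = r) (x : C0 p) (y : C0 q),
    u0 r (C.mul h x y) = B.mul h (u0 p x) (u0 q y)
  u1_smul : ∀ {p q r : ℕ} (h : p + q = r) (x : C0 p) (s : C1 q),
    u1 r (C.smul h x s) = B.smul h (u0 p x) (u1 q s)
  u1_smulr : ∀ {p q r : ℕ} (h : p + q = r) (s : C1 p) (x : C0 q),
    u1 r (C.smulr h s x) = B.smulr h (u1 p s) (u0 q x)
  cupBC : ∀ {p q r : ℕ}, p + q = r → A0 p → C0 q → A1 r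
  cupCB : ∀ {p q r : ℕ}, p + q = r → C0 p → A0 q → A1 r
  cupBC_add_left : ∀ {p q r : ℕ} (h : p + q = r) (x x' : A0 p) (y : C0 q),
    cupBC h (x + x') y = cupBC h x y + cupBC h x' y
  cupBC_add_right : ∀ {p q r : ℕ} (h : p + q = r) (x : A0 p) (y y' : C0 q),
    cupBC h x (y + y') = cupBC h x y + cupBC h x y'
  cupCB_add_left : ∀ {p q r : ℕ} (h : p + q = r) (x x' : C0 p) (y : A0 q),
    cupCB h (x + x') y = cupCB h x y + cupCB h x' y
  cupCB_add_right : ∀ {p q r : ℕ} (h : p + q = r) (x : C0 p) (y y' : A0 q),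
    cupCB h x (y + y') = cupCB h x y + cupCB h x y'
  -- u₁(x̃₁ ⌣₁ x̃₂) = u₀(x̃₁) ⌣₁ x̃₂ = x̃₁ ⌣₁ u₀(x̃₂)
  u_cup_BC : ∀ {p q r : ℕ} (h : p + q = r) (x : C0 p) (y : C0 q),
    u1 r (Ccup.cup h x y) = cupBC h (u0 p x) y
  u_cup_CB : ∀ {p q r : ℕ} (h : p + q = r) (x : C0 p) (y : C0 q),
    u1 r (Ccup.cup h x y) = cupCB h x (u0 q y)
  -- (−1)^{pq} x₂·u₀(x̃₁) + ∂(x̃₁ ⌣₁ x₂) = u₀(x̃₁)·x₂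
  loes : ∀ {p q r : ℕ} (h : p + q = r) (xt : C0 p) (x : A0 q),
    ((-1 : ℤ) ^ (p * q)) • B.mul ((Nat.add_comm q p).trans h) x (u0 p xt)
      + B.d r (cupCB h xt x) = B.mul h (u0 p xt) x
  -- (−1)^{pq} u₀(x̃₂)·s + ∂(s) ⌣₁ x̃₂ = s·u₀(x̃₂)
  biende : ∀ {p q r : ℕ} (h : p + q = r) (s : A1 p) (xt : C0 q),
    ((-1 : ℤ) ^ (p * q)) • B.smul ((Nat.add_comm q p).trans h) (u0 q xt) s
      + cupBC h (B.d p s) xt = B.smulr h s (u0 q xt)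
  -- (−1)^{pq} x₂·u₁(s̃) + ∂(s̃) ⌣₁ x₂ = u₁(s̃)·x₂
  node : ∀ {p q r : ℕ} (h : p + q = r) (st : C1 p) (x : A0 q),
    ((-1 : ℤ) ^ (p * q)) • B.smul ((Nat.add_comm q p).trans h) x (u1 p st)
      + cupCB h (C.d p st) x = B.smulr h (u1 p st) x
  -- (−1)^{pq} x₂ ⌣₁ x̃₁ + x̃₁ ⌣₁ x₂ = 0
  comi : ∀ {p q r : ℕ} (h : p + q = r) (xt : C0 p) (x : A0 q),
    ((-1 : ℤ) ^ (p * q)) • cupBC ((Nat.add_comm q p).trans h) x xt + cupCB h xt x = 0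
  -- (x̃₁·x̃₂) ⌣₁ x₃ = (−1)^{qr} (x̃₁ ⌣₁ x₃)·u₀(x̃₂) + u₀(x̃₁)·(x̃₂ ⌣₁ x₃)
  otrolin : ∀ {p q r : ℕ} (x₁ : C0 p) (x₂ : C0 q) (x₃ : A0 r),
    cupCB rfl (C.mul rfl x₁ x₂) x₃
      = ((-1 : ℤ) ^ (q * r)) •
          B.smulr (by omega : p + r + q = p + q + r) (cupCB rfl x₁ x₃) (u0 q x₂)
        + B.smul (by omega : p + (q + r) = p + q + r) (u0 p x₁) (cupCB rfl x₂ x₃)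
  -- (x₁·x₂) ⌣₁ x̃₃ = (−1)^{qr} (x₁ ⌣₁ x̃₃)·x₂ + x₁·(x₂ ⌣₁ x̃₃)
  isder : ∀ {p q r : ℕ} (x₁ : A0 p) (x₂ : A0 q) (x₃ : C0 r),
    cupBC rfl (B.mul rfl x₁ x₂) x₃
      = ((-1 : ℤ) ^ (q * r)) •
          B.smulr (by omega : p + r + q = p + q + r) (cupBC rfl x₁ x₃) x₂
        + B.smul (by omega : p + (q + r) = p + q + r) x₁ (cupBC rfl x₂ x₃)

variable {C : PairAlgebra C0 C1} {Ccup : EInftyCup C} {B : PairAlgebra A0 A1}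

/-- The map `θ_{(x,y)}` on representatives:
`θ_{(x,y)}(ā) = −y·ā + (−1)^{n·|ā|} ā·y + x ⌣₁ ā`. -/
def theta (CA : CAlgebra C Ccup B) (n : ℕ) (x : C0 n) (y : A1 n)
    (k : ℕ) (ab : A0 k) : A1 (n + k) :=
  -(B.smulr rfl y ab) + ((-1 : ℤ) ^ (n * k)) • B.smul (Nat.add_comm k n) ab y
    + CA.cupCB rfl x ab

namespace PairAlgebra

variable (B) {n p q r pq qr t : ℕ}

-- With free degrees related by equations, terms arising in the degrees `(n + k) + l` and
-- `k + (n + l)` can be rewritten in the common degree `n + (k + l)` without casts.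
lemma mul_smul_assoc_of_add_eq (hpq : p + q = pq) (h : pq + r = t) (hqr : q + r = qr)
    (h' : p + qr = t) (a : A0 p) (b : A0 q) (s : A1 r) :
    B.smul h (B.mul hpq a b) s = B.smul h' a (B.smul hqr b s) := by
  subst hpq hqr h
  exact B.mul_smul_assoc a b s

lemma smul_smulr_assoc_of_add_eq (hpq : p + q = pq) (h : pq + r = t) (hqr : q + r = qr)
    (h' : p + qr = t) (a : A0 p) (s : A1 q) (b : A0 r) :
    B.smulr h (B.smul hpq a s) b = B.smul h' a (B.smulr hqr s b) := by
  subst hpq hqr h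
  exact B.smul_smulr_assoc a s b

lemma smulr_mul_assoc_of_add_eq (hpq : p + q = pq) (h : pq + r = t) (hqr : q + r = qr)
    (h' : p + qr = t) (s : A1 p) (a : A0 q) (b : A0 r) :
    B.smulr h (B.smulr hpq s a) b = B.smulr h' s (B.mul hqr a b) := by
  subst hpq hqr h
  exact B.smulr_mul_assoc s a b

/-- The left action of a ring element on the bimodule, as an additive homomorphism. -/
def smulHom (h : p + q = r) (a : A0 p) : A1 q →+ A1 r :=
  AddMonoidHom.mk' (B.smul h a) (B.smul_add h a)

/-- The right action of a ring element on the bimodule, as an additive homomorphism. -/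
def smulrHom (h : p + q = r) (a : A0 q) : A1 p →+ A1 r :=
  AddMonoidHom.mk' (fun s ↦ B.smulr h s a) fun s s' ↦ B.add_smulr h s s' a

protected lemma smul_sub (h : p + q = r) (a : A0 p) (s s' : A1 q) :
    B.smul h a (s - s') = B.smul h a s - B.smul h a s' :=
  map_sub (B.smulHom h a) s s'

lemma smul_zsmul (h : p + q = r) (a : A0 p) (m : ℤ) (s : A1 q) :
    B.smul h a (m • s) = m • B.smul h a s :=
  map_zsmul (B.smulHom h a) m s

lemma sub_smulr (h : p + q = r) (s s' : A1 p) (a : A0 q) :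
    B.smulr h (s - s') a = B.smulr h s a - B.smulr h s' a :=
  map_sub (B.smulrHom h a) s s'

lemma zsmul_smulr (h : p + q = r) (m : ℤ) (s : A1 p) (a : A0 q) :
    B.smulr h (m • s) a = m • B.smulr h s a :=
  map_zsmul (B.smulrHom h a) m s

/-- A family of additive maps `B_{k,0} → B_{n+k,1}` is a graded derivation of degree `n` if it
satisfies the Leibniz rule `D(a·b) = D(a)·b + (−1)^{n·|a|} a·D(b)`. -/
def IsGradedDerivation (D : ∀ k, A0 k →+ A1 (n + k)) : Prop :=
  ∀ (k l : ℕ) (a : A0 k) (b : A0 l),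
    D (k + l) (B.mul rfl a b)
      = B.smulr (Nat.add_assoc n k l) (D k a) b
        + ((-1 : ℤ) ^ (n * k)) • B.smul (Nat.add_left_comm k n l) a (D l b)

/-- The graded commutator `[s, a] = s·a − (−1)^{n·|a|} a·s` with a fixed `s ∈ B_{n,1}`. -/
def commutator (s : A1 n) (k : ℕ) : A0 k →+ A1 (n + k) :=
  AddMonoidHom.mk'
    (fun a ↦ B.smulr rfl s a - ((-1 : ℤ) ^ (n * k)) • B.smul (Nat.add_comm k n) a s)
    fun a a' ↦ by
      rw [B.smulr_add, B.add_smul]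
      module

lemma commutator_apply (s : A1 n) (k : ℕ) (a : A0 k) :
    B.commutator s k a
      = B.smulr rfl s a - ((-1 : ℤ) ^ (n * k)) • B.smul (Nat.add_comm k n) a s :=
  rfl

lemma d_commutator (s : A1 n) (k : ℕ) (a : A0 k) :
    B.d (n + k) (B.commutator s k a)
      = B.mul rfl (B.d n s) a
        - ((-1 : ℤ) ^ (n * k)) • B.mul (Nat.add_comm k n) a (B.d n s) := by
  rw [commutator_apply, map_sub, map_zsmul, B.d_smulr, B.d_smul]

lemma commutator_d (s : A1 n) (k : ℕ) (c : A1 k) :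
    B.commutator s k (B.d k c)
      = B.smul rfl (B.d n s) c
        - ((-1 : ℤ) ^ (n * k)) • B.smulr (Nat.add_comm k n) c (B.d n s) := by
  rw [commutator_apply, B.smul_d, B.smul_d]

variable {B}

lemma IsGradedDerivation.sub {D D' : ∀ k, A0 k →+ A1 (n + k)} (hD : B.IsGradedDerivation D)
    (hD' : B.IsGradedDerivation D') : B.IsGradedDerivation (D - D') := by
  intro k l a b
  simp only [Pi.sub_apply, AddMonoidHom.sub_apply, hD k l a b, hD' k l a b, B.sub_smulr,
    B.smul_sub, smul_sub]
  abel

lemma isGradedDerivation_commutator (s : A1 n) : B.IsGradedDerivation (B.commutator s) := by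
  intro k l a b
  simp only [commutator_apply, B.sub_smulr, B.zsmul_smulr, B.smul_sub, B.smul_zsmul]
  rw [B.smulr_mul_assoc_of_add_eq rfl (Nat.add_assoc n k l) rfl rfl,
    B.smul_smulr_assoc_of_add_eq _ (Nat.add_assoc n k l) rfl (Nat.add_left_comm k n l),
    B.mul_smul_assoc_of_add_eq rfl _ (Nat.add_comm l n) (Nat.add_left_comm k n l),
    Nat.mul_add, pow_add]
  module

end PairAlgebra

namespace CAlgebra

variable (CA : CAlgebra C Ccup B) {n p q r pq pr qr t : ℕ}

lemma cupBC_mul_of_add_eq (hpq : p + q = pq) (h : pq + r = t) (hpr : p + r = pr)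
    (h' : pr + q = t) (hqr : q + r = qr) (h'' : p + qr = t) (a : A0 p) (b : A0 q) (x : C0 r) :
    CA.cupBC h (B.mul hpq a b) x
      = ((-1 : ℤ) ^ (q * r)) • B.smulr h' (CA.cupBC hpr a x) b
        + B.smul h'' a (CA.cupBC hqr b x) := by
  subst hpq hpr hqr h
  exact CA.isder a b x

lemma cupCB_eq_zsmul_cupBC (h : p + q = r) (x : C0 p) (a : A0 q) :
    CA.cupCB h x a = (-(-1 : ℤ) ^ (p * q)) • CA.cupBC ((Nat.add_comm q p).trans h) a x := by
  rw [neg_smul]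
  exact eq_neg_of_add_eq_zero_right (CA.comi h x a)

lemma d_cupCB (h : p + q = r) (x : C0 p) (a : A0 q) :
    B.d r (CA.cupCB h x a)
      = B.mul h (CA.u0 p x) a
        - ((-1 : ℤ) ^ (p * q)) • B.mul ((Nat.add_comm q p).trans h) a (CA.u0 p x) :=
  eq_sub_of_add_eq' (CA.loes h x a)

lemma cupBC_d (h : p + q = r) (s : A1 p) (x : C0 q) :
    CA.cupBC h (B.d p s) x
      = B.smulr h s (CA.u0 q x)
        - ((-1 : ℤ) ^ (p * q)) • B.smul ((Nat.add_comm q p).trans h) (CA.u0 q x) s :=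
  eq_sub_of_add_eq' (CA.biende h s x)

lemma cupCB_d (h : p + q = r) (x : C0 p) (c : A1 q) :
    CA.cupCB h x (B.d q c)
      = B.smul h (CA.u0 p x) c
        - ((-1 : ℤ) ^ (p * q)) • B.smulr ((Nat.add_comm q p).trans h) c (CA.u0 p x) := by
  have sign_sq : (-1 : ℤ) ^ (p * q) * (-1) ^ (p * q) = 1 :=
    pow_mul_pow_eq_one _ (by norm_num)
  rw [cupCB_eq_zsmul_cupBC, cupBC_d, Nat.mul_comm q p, smul_sub, smul_smul, neg_mul, sign_sq]
  module

/-- The operation `x ⌣₁ -` on `B_{*,0}` for a fixed `x ∈ C_{n,0}`. -/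
def cupHom (x : C0 n) (k : ℕ) : A0 k →+ A1 (n + k) :=
  AddMonoidHom.mk' (CA.cupCB rfl x) (CA.cupCB_add_right rfl x)

lemma cupHom_apply (x : C0 n) (k : ℕ) (a : A0 k) : CA.cupHom x k a = CA.cupCB rfl x a :=
  rfl

lemma isGradedDerivation_cupHom (x : C0 n) : B.IsGradedDerivation (CA.cupHom x) := by
  intro k l a b
  have sign_sq : (-1 : ℤ) ^ (n * l) * (-1) ^ (n * l) = 1 :=
    pow_mul_pow_eq_one _ (by norm_num)
  simp only [cupHom_apply, cupCB_eq_zsmul_cupBC, B.zsmul_smulr, B.smul_zsmul]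
  rw [CA.cupBC_mul_of_add_eq rfl _ (Nat.add_comm k n) (Nat.add_assoc n k l) (Nat.add_comm l n)
    (Nat.add_left_comm k n l), Nat.mul_add, pow_add, Nat.mul_comm l n, smul_add, smul_smul,
    neg_mul, mul_assoc, sign_sq]
  module

variable {x : C0 n} {y : A1 n}

lemma d_cupHom_eq_d_commutator (hyx : B.d n y = CA.u0 n x) (k : ℕ) (a : A0 k) :
    B.d (n + k) (CA.cupHom x k a) = B.d (n + k) (B.commutator y k a) := by
  rw [cupHom_apply, d_cupCB, B.d_commutator, hyx]

lemma cupHom_d_eq_commutator_d (hyx : B.d n y = CA.u0 n x) (k : ℕ) (c : A1 k) :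
    CA.cupHom x k (B.d k c) = B.commutator y k (B.d k c) := by
  rw [cupHom_apply, cupCB_d, B.commutator_d, hyx]

lemma cupHom_u0_eq_commutator_u0 (hyx : B.d n y = CA.u0 n x) (k : ℕ) (z : C0 k) :
    CA.cupHom x k (CA.u0 k z) = B.commutator y k (CA.u0 k z) := by
  rw [cupHom_apply, ← CA.u_cup_CB, CA.u_cup_BC, ← hyx, cupBC_d, B.commutator_apply]

lemma theta_eq_cupHom_sub_commutator (x : C0 n) (y : A1 n) (k : ℕ) (a : A0 k) :
    theta CA n x y k a = (CA.cupHom x - B.commutator y) k a := by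
  rw [theta, Pi.sub_apply, AddMonoidHom.sub_apply, cupHom_apply, B.commutator_apply]
  abel

end CAlgebra

/-- For a `C`-algebra `B` with unit `u`, `x ∈ C_{n,0}` and `y ∈ B_{n,1}` with
`∂y = u₀(x)`, the element `θ_{(x,y)}(ā) = −y·ā + (−1)^{n|a|}ā·y + x ⌣₁ ā` lies in
`h₁B = Ker ∂`, is independent of the representative `ā`, is additive, is a degree-`n`
derivation, and vanishes on the image of `h₀u` (hence is `h₀C`-linear). -/
theorem cAlgebra_theta_derivation (CA : CAlgebra C Ccup B) (n : ℕ)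
    (x : C0 n) (y : A1 n) (hyx : B.d n y = CA.u0 n x) :
    (∀ (k : ℕ) (ab : A0 k), B.d (n + k) (theta CA n x y k ab) = 0) ∧
    (∀ (k : ℕ) (ab : A0 k) (c : A1 k),
      theta CA n x y k (ab + B.d k c) = theta CA n x y k ab) ∧
    (∀ (k : ℕ) (ab ab' : A0 k),
      theta CA n x y k (ab + ab') = theta CA n x y k ab + theta CA n x y k ab') ∧
    (∀ (k k' : ℕ) (ab : A0 k) (bb : A0 k'),
      theta CA n x y (k + k') (B.mul rfl ab bb)
        = B.smulr (by omega : n + k + k' = n + (k + k')) (theta CA n x y k ab) bb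
          + ((-1 : ℤ) ^ (n * k)) •
            B.smul (by omega : k + (n + k') = n + (k + k')) ab (theta CA n x y k' bb)) ∧
    (∀ (k : ℕ) (xt : C0 k), theta CA n x y k (CA.u0 k xt) = 0) := by
  simp only [CA.theta_eq_cupHom_sub_commutator]
  have theta_boundary (k : ℕ) (c : A1 k) : (CA.cupHom x - B.commutator y) k (B.d k c) = 0 :=
    sub_eq_zero.2 (CA.cupHom_d_eq_commutator_d hyx k c)
  refine ⟨fun k a ↦ ?cycle, fun k a c ↦ ?representative, fun k ↦ map_add _, ?leibniz,
    fun k z ↦ ?unit⟩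
  case cycle =>
    rw [Pi.sub_apply, AddMonoidHom.sub_apply, map_sub, CA.d_cupHom_eq_d_commutator hyx, sub_self]
  case representative => rw [map_add, theta_boundary, add_zero]
  case leibniz =>
    exact (CA.isGradedDerivation_cupHom x).sub (PairAlgebra.isGradedDerivation_commutator y)
  case unit => exact sub_eq_zero.2 (CA.cupHom_u0_eq_commutator_u0 hyx k z)
end
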